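/- For n ≥ 1, let M(n) = max{|μ(1,π)| : π a permutation of length n}. Then M(n) ≥ 2^{⌊n/4⌋ − 1} for all n ≥ 1 (interpreting 2^{−1} = 1/2 when n < 4). In particular, the maximum absolute value of the principal Möbius function over permutations of length n grows at least exponentially in n. -/

import Mathlib

/-!
The permutation pattern poset and its Möbius function.

A permutation of length `n` is represented as an element of the symmetric
group on `Fin n`; the collection of all permutations of all lengths is the
sigma type `PPerm`.  Pattern containment `PPerm.Le` makes `PPerm` into the
permutation pattern poset, and `mu` is its Möbius function, defined by the
usual recursion `μ(σ,σ) = 1`, `μ(σ,π) = -∑_{σ ≤ λ < π} μ(σ,λ)` for `σ < π`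
and `μ(σ,π) = 0` otherwise.
-/

open scoped Classical

/-- A permutation of an arbitrary finite length `n`, as an element of the
symmetric group on `Fin n`. -/
abbrev PPerm : Type := Σ n : ℕ, Equiv.Perm (Fin n)

namespace PPerm

/-- Classical pattern containment `σ ≤ π`: there is a strictly increasing map
of positions along which `π` realises the same relative order as `σ`. -/
def Le (σ π : PPerm) : Prop :=
  ∃ f : Fin σ.1 → Fin π.1, StrictMono f ∧
    ∀ a b : Fin σ.1, σ.2 a < σ.2 b ↔ π.2 (f a) < π.2 (f b)

/-- Strict pattern containment. -/
def Lt (σ π : PPerm) : Prop := Le σ π ∧ σ ≠ π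

/-- The permutation `1` of length one. -/
def one : PPerm := ⟨1, 1⟩

/-- The direct sum `α ⊕ β` of two permutations: `β` is placed after and
above `α`. -/
def dsum (α β : PPerm) : PPerm :=
  ⟨α.1 + β.1, finSumFinEquiv.symm.trans ((Equiv.sumCongr α.2 β.2).trans finSumFinEquiv)⟩

end PPerm

/-- Fuelled recursion computing the Möbius function of the permutation
pattern poset.  Any `λ` with `σ ≤ λ < π` has length `< |π|`, so for any
fuel `≥ |π| + 1` this computes the standard recursion
`μ(σ,σ) = 1`, `μ(σ,π) = -∑_{σ ≤ λ < π} μ(σ,λ)` for `σ < π`, and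
`μ(σ,π) = 0` when `σ ≰ π`. -/
noncomputable def muAux : ℕ → PPerm → PPerm → ℤ
  | 0, _, _ => 0
  | n + 1, σ, π =>
    if σ = π then 1
    else if PPerm.Le σ π then
      - ∑ m ∈ Finset.range π.1,
          ∑ p ∈ Finset.univ.filter
              (fun p : Equiv.Perm (Fin m) => PPerm.Le σ ⟨m, p⟩ ∧ PPerm.Le ⟨m, p⟩ π),
            muAux n σ ⟨m, p⟩
    else 0

/-- The Möbius function of the permutation pattern poset. -/
noncomputable def mu (σ π : PPerm) : ℤ := muAux (π.1 + 1) σ π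

/-- The closed interval `[σ, π]` of the permutation pattern poset, as a
finset (any `λ ≤ π` has length `≤ |π|`). -/
noncomputable def intervalCC (σ π : PPerm) : Finset PPerm :=
  (Finset.range (π.1 + 1)).biUnion fun m =>
    (Finset.univ.filter fun p : Equiv.Perm (Fin m) =>
        PPerm.Le σ ⟨m, p⟩ ∧ PPerm.Le ⟨m, p⟩ π).image fun p => (⟨m, p⟩ : PPerm)

/-- The half-open interval `[σ, π)` of the permutation pattern poset. -/
noncomputable def intervalCO (σ π : PPerm) : Finset PPerm :=
  (intervalCC σ π).filter fun lam => lam ≠ π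

/-- `M(n)`: the maximum of `|μ(1,π)|` over all permutations `π` of
length `n`. -/
noncomputable def maxAbsMu (n : ℕ) : ℕ :=
  Finset.univ.sup fun p : Equiv.Perm (Fin n) => (mu PPerm.one ⟨n, p⟩).natAbs

/-!
A permutation is considered through its plot, a set of points in the plane up to order isomorphism.
Adding to the plot of `δ` a point beyond it in a diagonal direction, a corner, gives a permutation
whose principal Möbius value is `-μ(1, δ)`, or `0` if `δ` already has a corner in that direction.
Placing four points around the plot of `δ` in the pattern `2413` gives the balloon of `δ`.

Suppose that `δ` has length at least two. The permutations with a corner on a given diagonal have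
the same total Möbius value below the balloon of `δ` as below `δ`, so this is also true of those
without corners. The permutations below the balloon of `δ` without corners that are not balloons
already lie below `δ`, so the total over the balloons is the same too. The balloons below the
balloon of `δ` correspond to the permutations below `δ` and to the empty one, and inverting this
identity shows that `μ(1, ·)` doubles from a balloon to the balloon around it. Thus `|μ(1, ·)|`
doubles every four steps, and adding corners in alternating directions keeps it constant in between.
-/

namespace PPerm

open Set

/-! ### Plots of permutations -/

section Plots

variable {α β α' β' α'' β'' ι κ : Type*} [LinearOrder α] [LinearOrder β] [LinearOrder α']
  [LinearOrder β'] [LinearOrder α''] [LinearOrder β''] {σ τ π : PPerm} {S T : Set (α × β)}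

/-- Two families of points in a plane have the same shape if their horizontal orders agree and
their vertical orders agree. -/
def SameShape (p : ι → α × β) (p' : ι → α' × β') : Prop :=
  ∀ i j, ((p i).1 < (p j).1 ↔ (p' i).1 < (p' j).1) ∧ ((p i).2 < (p j).2 ↔ (p' i).2 < (p' j).2)

lemma SameShape.symm {p : ι → α × β} {p' : ι → α' × β'} (h : SameShape p p') : SameShape p' p :=
  fun i j ↦ ⟨(h i j).1.symm, (h i j).2.symm⟩

lemma SameShape.trans {p : ι → α × β} {p' : ι → α' × β'} {p'' : ι → α'' × β''}
    (h : SameShape p p') (h' : SameShape p' p'') : SameShape p p'' :=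
  fun i j ↦ ⟨(h i j).1.trans (h' i j).1, (h i j).2.trans (h' i j).2⟩

lemma SameShape.comp {p : ι → α × β} {p' : ι → α' × β'} (h : SameShape p p') (f : κ → ι) :
    SameShape (p ∘ f) (p' ∘ f) :=
  fun i j ↦ h (f i) (f j)

lemma SameShape.eq {p : ι → α × β} {p' : ι → α' × β'} (h : SameShape p p') {i j : ι}
    (hij : p i = p j) : p' i = p' j := by
  have h₁ := h i j
  have h₂ := h j i
  simp only [hij, lt_irrefl, false_iff, not_lt] at h₁ h₂
  exact Prod.ext (le_antisymm h₂.1 h₁.1) (le_antisymm h₂.2 h₁.2)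

lemma SameShape.exists_of_range_eq {e : ι → α × β} {e' : ι → α' × β'} {p : κ → α × β}
    (h : SameShape e e') (hp : range p = range e) :
    ∃ p' : κ → α' × β', SameShape p p' ∧ range p' = range e' := by
  choose k hk using fun j ↦ hp.subset (mem_range_self j)
  obtain rfl : e ∘ k = p := funext hk
  refine ⟨e' ∘ k, h.comp k, (range_comp_subset_range k e').antisymm ?_⟩
  rintro _ ⟨i, rfl⟩
  obtain ⟨j, hj⟩ := hp.superset (mem_range_self i)
  exact ⟨j, h.eq hj⟩

/-- The points `(i, σ(i))` of the graph of a permutation. -/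
def graph (σ : PPerm) (i : Fin σ.1) : Fin σ.1 × Fin σ.1 := (i, σ.2 i)

lemma graph_injective (σ : PPerm) : Function.Injective (graph σ) :=
  fun _ _ h ↦ congrArg Prod.fst h

lemma le_iff_exists_sameShape :
    Le σ π ↔ ∃ f : Fin σ.1 → Fin π.1, SameShape (graph σ) (graph π ∘ f) :=
  ⟨fun ⟨f, hf, h⟩ ↦ ⟨f, fun i j ↦ ⟨hf.lt_iff_lt.symm, h i j⟩⟩,
    fun ⟨f, hf⟩ ↦ ⟨f, fun i j h ↦ (hf i j).1.1 h, fun i j ↦ (hf i j).2⟩⟩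

lemma Le.refl (σ : PPerm) : Le σ σ :=
  ⟨id, strictMono_id, fun _ _ ↦ Iff.rfl⟩

lemma Le.of_eq (h : σ = π) : Le σ π :=
  h ▸ Le.refl σ

lemma Le.trans (h : Le σ τ) (h' : Le τ π) : Le σ π := by
  obtain ⟨f, hf, hfσ⟩ := h
  obtain ⟨g, hg, hgτ⟩ := h'
  exact ⟨g ∘ f, hg.comp hf, fun i j ↦ (hfσ i j).trans (hgτ _ _)⟩

lemma Le.length_le (h : Le σ π) : σ.1 ≤ π.1 := by
  obtain ⟨f, hf, -⟩ := h
  simpa using Fintype.card_le_of_injective f hf.injective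

lemma Le.eq_of_length_eq (h : Le σ π) (hlen : σ.1 = π.1) : σ = π := by
  obtain ⟨n, σ⟩ := σ
  obtain ⟨m, π⟩ := π
  obtain rfl : n = m := hlen
  obtain ⟨f, hf, hσπ⟩ := h
  obtain rfl : f = id := hf.eq_id
  have hmono : StrictMono (π ∘ σ.symm) := fun i j hij ↦
    (hσπ _ _).1 (by simpa only [Equiv.apply_symm_apply] using hij)
  refine congrArg (Sigma.mk n) (Equiv.ext fun i ↦ ?_)
  simpa only [Function.comp_apply, Equiv.symm_apply_apply, id_eq] using
    (congrFun hmono.eq_id (σ i)).symm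

lemma Le.antisymm (h : Le σ π) (h' : Le π σ) : σ = π :=
  h.eq_of_length_eq (h.length_le.antisymm h'.length_le)

lemma Le.length_lt (h : Le σ π) (hne : σ ≠ π) : σ.1 < π.1 :=
  h.length_le.lt_of_ne fun hlen ↦ hne (h.eq_of_length_eq hlen)

/-- `S` is a plot of `σ` if its points form, up to an increasing change of each coordinate, the
graph of `σ`; this is the usual reading of a permutation off a point set in general position. -/
def IsPlot (σ : PPerm) (S : Set (α × β)) : Prop :=
  ∃ e : Fin σ.1 → α × β, SameShape (graph σ) e ∧ range e = S

lemma le_iff_exists_subset (hS : IsPlot π S) : Le σ π ↔ ∃ T ⊆ S, IsPlot σ T := by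
  obtain ⟨e, he, rfl⟩ := hS
  rw [le_iff_exists_sameShape]
  constructor
  · rintro ⟨f, hf⟩
    exact ⟨_, range_comp_subset_range f e, e ∘ f, hf.trans (he.comp f), rfl⟩
  · rintro ⟨_, hT, e', he', rfl⟩
    choose f hf using fun i ↦ hT (mem_range_self i)
    obtain rfl : e ∘ f = e' := funext hf
    exact ⟨f, he'.trans (he.comp f).symm⟩

lemma IsPlot.le_of_subset (hT : IsPlot σ T) (hS : IsPlot π S) (h : T ⊆ S) : Le σ π :=
  (le_iff_exists_subset hS).2 ⟨T, h, hT⟩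

lemma IsPlot.unique (hσ : IsPlot σ S) (hτ : IsPlot τ S) : σ = τ :=
  (hσ.le_of_subset hτ subset_rfl).antisymm (hτ.le_of_subset hσ subset_rfl)

lemma isPlot_iff_exists_sameShape {p : ι → α × β} (hp : IsPlot σ (range p))
    {S : Set (α' × β')} : IsPlot σ S ↔ ∃ p' : ι → α' × β', SameShape p p' ∧ range p' = S := by
  obtain ⟨e, he, hep⟩ := hp
  constructor
  · rintro ⟨e', he', rfl⟩
    exact (he.symm.trans he').exists_of_range_eq hep.symm
  · rintro ⟨p', hp', rfl⟩
    obtain ⟨e', he', h⟩ := hp'.exists_of_range_eq hep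
    exact ⟨e', he.trans he', h⟩

lemma IsPlot.length_eq_card [Fintype ι] {p : ι → α × β} (hp : IsPlot σ (range p))
    (hinj : Function.Injective p) : σ.1 = Fintype.card ι := by
  obtain ⟨e, he, hep⟩ := hp
  have heinj : Function.Injective e := fun i j h ↦ graph_injective σ (he.symm.eq h)
  rw [← Nat.card_eq_fintype_card, ← Nat.card_range_of_injective hinj, ← hep,
    Nat.card_range_of_injective heinj, Nat.card_fin]

/-- No two points of the family lie on a common vertical or horizontal line. -/
def InGeneralPosition (p : ι → α × β) : Prop :=
  Function.Injective (fun i ↦ (p i).1) ∧ Function.Injective (fun i ↦ (p i).2)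

lemma exists_rank [Fintype ι] {x : ι → α} (hx : Function.Injective x) :
    ∃ r : ι ≃ Fin (Fintype.card ι), ∀ i j, r i < r j ↔ x i < x j := by
  let := LinearOrder.lift' x hx
  exact ⟨(Fintype.orderIsoFinOfCardEq ι rfl).symm.toEquiv,
    fun _ _ ↦ (Fintype.orderIsoFinOfCardEq ι rfl).symm.lt_iff_lt⟩

lemma InGeneralPosition.exists_isPlot [Finite ι] {p : ι → α × β} (hp : InGeneralPosition p) :
    ∃ σ, IsPlot σ (range p) := by
  have := Fintype.ofFinite ι
  obtain ⟨r, hr⟩ := exists_rank hp.1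
  obtain ⟨s, hs⟩ := exists_rank hp.2
  refine ⟨⟨_, r.symm.trans s⟩, p ∘ r.symm, fun i j ↦ ⟨?_, hs _ _⟩, EquivLike.range_comp p r.symm⟩
  simpa only [graph, Function.comp_apply, r.apply_symm_apply] using hr (r.symm i) (r.symm j)

lemma SameShape.inGeneralPosition {p : ι → α × β} {p' : ι → α' × β'} (h : SameShape p p')
    (hp : InGeneralPosition p) : InGeneralPosition p' := by
  have h' := h.symm
  exact ⟨fun i j hij ↦ hp.1 (le_antisymm (not_lt.1 fun hlt ↦ ((h' j i).1.2 hlt).ne' hij)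
      (not_lt.1 fun hlt ↦ ((h' i j).1.2 hlt).ne hij)),
    fun i j hij ↦ hp.2 (le_antisymm (not_lt.1 fun hlt ↦ ((h' j i).2.2 hlt).ne' hij)
      (not_lt.1 fun hlt ↦ ((h' i j).2.2 hlt).ne hij))⟩

lemma inGeneralPosition_graph (σ : PPerm) : InGeneralPosition (graph σ) :=
  ⟨Function.injective_id, σ.2.injective⟩

lemma IsPlot.exists_of_subset (hS : IsPlot π S) (hT : T ⊆ S) : ∃ σ, Le σ π ∧ IsPlot σ T := by
  obtain ⟨e, he, rfl⟩ := hS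
  have hpos : InGeneralPosition fun i : e ⁻¹' T ↦ e i := by
    have hpos := he.inGeneralPosition (inGeneralPosition_graph π)
    exact ⟨hpos.1.comp Subtype.coe_injective, hpos.2.comp Subtype.coe_injective⟩
  obtain ⟨σ, hσ⟩ := hpos.exists_isPlot
  have hrange : range (fun i : e ⁻¹' T ↦ e i) = T := by
    rw [← image_eq_range, image_preimage_eq_of_subset hT]
  rw [hrange] at hσ
  exact ⟨σ, hσ.le_of_subset ⟨e, he, rfl⟩ hT, hσ⟩

lemma exists_isPlot_box (σ : PPerm) : ∃ e : Fin σ.1 → ℤ × ℤ,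
    IsPlot σ (range e) ∧ ∀ i, e i ∈ Ico 0 (σ.1 : ℤ) ×ˢ Ico 0 (σ.1 : ℤ) := by
  refine ⟨fun i ↦ (i, σ.2 i), ⟨_, fun i j ↦ ?_, rfl⟩, fun i ↦ ?_⟩
  · simp only [graph, Int.ofNat_lt, Fin.val_fin_lt, and_self]
  · simp only [mem_prod, mem_Ico]
    omega

lemma exists_isPlot (σ : PPerm) : ∃ S : Set (ℤ × ℤ), IsPlot σ S :=
  (exists_isPlot_box σ).imp' range fun _ h ↦ h.1

end Plots

/-! ### Corners around a permutation -/

/-- One of the four open quadrants, given by the signs of the two coordinates. -/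
abbrev Direction : Type := ℤˣ × ℤˣ

/-- The quarter turn of a direction, clockwise. -/
def rot (s : Direction) : Direction := (s.2, -s.1)

lemma rot_rot (s : Direction) : rot (rot s) = -s := by
  simp only [rot, Prod.ext_iff, Prod.fst_neg, Prod.snd_neg, and_self]

lemma neg_direction_ne (s : Direction) : -s ≠ s := by
  decide +revert

lemma rot_ne (s : Direction) : rot s ≠ s := by
  decide +revert

lemma rot_ne_neg (s : Direction) : rot s ≠ -s := by
  decide +revert

lemma rot_neg_ne (s : Direction) : rot (-s) ≠ s := by
  decide +revert

lemma rot_neg_ne_rot (s : Direction) : rot (-s) ≠ rot s := by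
  decide +revert

lemma ne_neg_of_eq_or_eq_rot {s t u : Direction} (ht : t = s ∨ t = rot s)
    (hu : u = s ∨ u = rot s) : t ≠ -u := by
  decide +revert

lemma direction_cases (s t : Direction) : t = s ∨ t = -s ∨ t = rot s ∨ t = -rot s := by
  decide +revert

lemma filter_ne_and_rot_ne (s : Direction) :
    ({t | t ≠ s ∧ rot t ≠ s} : Finset Direction) = {rot s, -s} := by
  decide +revert

lemma eq_empty_or_eq_univ_or_exists_forall_rot_ne (E : Finset Direction) :
    E = ∅ ∨ E = Finset.univ ∨ ∃ s ∈ E, ∀ t ∈ E, rot t ≠ s := by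
  decide +revert

/-- The point `p` lies beyond `r` in direction `s`: the vector `p - r` is in the quadrant `s`. -/
def Beyond (s : Direction) (p r : ℤ × ℤ) : Prop :=
  0 < (s.1 : ℤ) * (p.1 - r.1) ∧ 0 < (s.2 : ℤ) * (p.2 - r.2)

variable {s t : Direction} {p r : ℤ × ℤ} {D E : Finset Direction} {q : Direction → ℤ × ℤ}
  {R S : Set (ℤ × ℤ)} {δ ε ε' lam π ρ σ τ : PPerm}

lemma units_mul_sub_pos (u : ℤˣ) (x y : ℤ) :
    0 < (u : ℤ) * (x - y) ↔ if u = 1 then y < x else x < y := by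
  obtain rfl | rfl := Int.units_eq_one_or u <;> simp

lemma beyond_iff : Beyond s p r ↔ (if s.1 = 1 then r.1 < p.1 else p.1 < r.1) ∧
    (if s.2 = 1 then r.2 < p.2 else p.2 < r.2) := by
  rw [Beyond, units_mul_sub_pos, units_mul_sub_pos]

lemma beyond_neg : Beyond (-s) p r ↔ Beyond s r p := by
  simp only [Beyond, Prod.fst_neg, Prod.snd_neg, Units.val_neg, neg_mul_comm, neg_sub]

lemma Beyond.direction_unique (hs : Beyond s p r) (ht : Beyond t p r) : s = t := by
  rw [beyond_iff] at hs ht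
  ext1
  · obtain h | h := Int.units_eq_one_or s.1 <;> obtain h' | h' := Int.units_eq_one_or t.1 <;> grind
  · obtain h | h := Int.units_eq_one_or s.2 <;> obtain h' | h' := Int.units_eq_one_or t.2 <;> grind

lemma Beyond.eq_neg_of_swap (hs : Beyond s p r) (ht : Beyond t r p) : s = -t :=
  hs.direction_unique (beyond_neg.2 ht)

lemma Beyond.ne (h : Beyond s p r) : p.1 ≠ r.1 ∧ p.2 ≠ r.2 := by
  rw [beyond_iff] at h
  grind

lemma not_beyond_self (s : Direction) (p : ℤ × ℤ) : ¬ Beyond s p p :=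
  fun h ↦ h.ne.1 rfl

lemma SameShape.beyond_iff {ι : Type*} {x x' : ι → ℤ × ℤ} (h : SameShape x x') {i j : ι} :
    Beyond s (x i) (x j) ↔ Beyond s (x' i) (x' j) := by
  simp only [PPerm.beyond_iff, (h i j).1, (h j i).1, (h i j).2, (h j i).2]

lemma Beyond.lt_iff_lt {p' r' : ℤ × ℤ} (h : Beyond s p r) (h' : Beyond s p' r') :
    (p.1 < r.1 ↔ p'.1 < r'.1) ∧ (p.2 < r.2 ↔ p'.2 < r'.2) := by
  rw [beyond_iff] at h h'
  grind

/-- The points `q s`, for `s ∈ D`, are arranged around the point set `R` as the corners of a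
pinwheel: `q s` is beyond `R` in direction `s`, and also beyond every other corner except possibly
the one whose direction is a quarter turn before `s`. -/
structure IsFrame (D : Finset Direction) (q : Direction → ℤ × ℤ) (R : Set (ℤ × ℤ)) : Prop where
  corner : ∀ s ∈ D, ∀ t ∈ D, t ≠ s → rot t ≠ s → Beyond s (q s) (q t)
  core : ∀ s ∈ D, ∀ r ∈ R, Beyond s (q s) r

namespace IsFrame

lemma mono (h : IsFrame D q R) (hE : E ⊆ D) {R' : Set (ℤ × ℤ)} (hR : R' ⊆ R) :
    IsFrame E q R' :=
  ⟨fun s hs t ht ↦ h.corner s (hE hs) t (hE ht), fun s hs r hr ↦ h.core s (hE hs) r (hR hr)⟩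

lemma beyond_corner (h : IsFrame D q R) (hs : s ∈ D) (ht : t ∈ D) (hts : t ≠ s) :
    Beyond (if rot t = s then rot s else s) (q s) (q t) := by
  split_ifs with hrot
  · subst hrot
    rw [rot_rot, beyond_neg]
    exact h.corner t ht _ hs hts.symm (by rw [rot_rot]; exact neg_direction_ne t)
  · exact h.corner s hs t ht hts hrot

lemma not_beyond (h : IsFrame D q R) (hs : s ∈ D) (ht : t = s ∨ t = rot s) {x : ℤ × ℤ}
    (hx : x ∈ q '' D ∪ R) : ¬ Beyond t x (q s) := by
  intro hxs
  suffices hsx : ∃ u, (u = s ∨ u = rot s) ∧ Beyond u (q s) x by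
    obtain ⟨u, hu, hsx⟩ := hsx
    have htu := hxs.eq_neg_of_swap hsx
    exact ne_neg_of_eq_or_eq_rot ht hu htu
  obtain ⟨v, hv, rfl⟩ | hx := hx
  · have hvs : v ≠ s := by rintro rfl; exact not_beyond_self _ _ hxs
    exact ⟨_, (ite_eq_or_eq _ _ _).symm, h.beyond_corner hs hv hvs⟩
  · exact ⟨s, Or.inl rfl, h.core s hs x hx⟩

end IsFrame

lemma exists_isFrame (D : Finset Direction) (δ : PPerm) : ∃ q R, IsFrame D q R ∧ IsPlot δ R := by
  obtain ⟨e, he, hbox⟩ := exists_isPlot_box δ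
  let c (s : Direction) : ℤ × ℤ := (3 * s.1 + (rot s).1, 3 * s.2 + (rot s).2)
  have hcorner (s t : Direction) : t ≠ s → rot t ≠ s → Beyond s (c s) (c t) := by
    unfold Beyond
    decide +revert
  have hcore (u v : ℤˣ) {x : ℤ} (hx : x ∈ Ico 0 (δ.1 : ℤ)) :
      0 < (u : ℤ) * ((δ.1 + 1) * (3 * u + v) - x) := by
    obtain ⟨h₀, h₁⟩ := hx
    obtain rfl | rfl := Int.units_eq_one_or u <;> obtain rfl | rfl := Int.units_eq_one_or v <;>
      push_cast <;> linarith
  refine ⟨fun s ↦ (δ.1 + 1 : ℤ) • c s, _, ⟨fun s _ t _ hts hrot ↦ ?_, ?_⟩, he⟩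
  · obtain ⟨h₁, h₂⟩ := hcorner s t hts hrot
    simp only [Beyond, Prod.smul_fst, Prod.smul_snd, smul_eq_mul, ← mul_sub,
      mul_left_comm (s.1 : ℤ), mul_left_comm (s.2 : ℤ)]
    exact ⟨by positivity, by positivity⟩
  · rintro s - _ ⟨i, rfl⟩
    exact ⟨hcore _ _ (hbox i).1, hcore _ _ (hbox i).2⟩

/-- The family consisting of the corners `q s`, for `s ∈ D`, and the points `e i`. -/
def framePoints {κ : Type*} (D : Finset Direction) (q : Direction → ℤ × ℤ) (e : κ → ℤ × ℤ) :
    D ⊕ κ → ℤ × ℤ :=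
  Sum.elim (fun s ↦ q s) e

lemma range_framePoints {κ : Type*} (e : κ → ℤ × ℤ) :
    range (framePoints D q e) = q '' D ∪ range e := by
  rw [framePoints, Sum.elim_range, image_eq_range]
  rfl

lemma exists_beyond_framePoints {κ : Type*} {i j : D ⊕ κ} (hij : i ≠ j)
    (hleft : i.isLeft ∨ j.isLeft) : ∃ u, ∀ (q : Direction → ℤ × ℤ) (e : κ → ℤ × ℤ),
      IsFrame D q (range e) → Beyond u (framePoints D q e i) (framePoints D q e j) := by
  obtain ⟨s, hs⟩ | a := i <;> obtain ⟨t, ht⟩ | b := j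
  · exact ⟨_, fun q e h ↦ h.beyond_corner hs ht fun hts ↦ hij (by subst hts; rfl)⟩
  · exact ⟨s, fun q e h ↦ h.core s hs _ (mem_range_self b)⟩
  · exact ⟨-t, fun q e h ↦ beyond_neg.2 (h.core t ht _ (mem_range_self a))⟩
  · simp at hleft

lemma IsFrame.inGeneralPosition {κ : Type*} {e : κ → ℤ × ℤ} (h : IsFrame D q (range e))
    (he : InGeneralPosition e) : InGeneralPosition (framePoints D q e) := by
  suffices hne : Pairwise fun i j ↦ (framePoints D q e i).1 ≠ (framePoints D q e j).1 ∧
      (framePoints D q e i).2 ≠ (framePoints D q e j).2 from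
    ⟨Function.injective_iff_pairwise_ne.2 fun i j hij ↦ (hne hij).1,
      Function.injective_iff_pairwise_ne.2 fun i j hij ↦ (hne hij).2⟩
  intro i j hij
  by_cases hleft : i.isLeft ∨ j.isLeft
  · obtain ⟨u, hu⟩ := exists_beyond_framePoints hij hleft
    exact (hu q e h).ne
  · obtain s | a := i <;> obtain t | b := j <;> simp at hleft
    have hab : a ≠ b := fun hab ↦ hij (congrArg Sum.inr hab)
    exact ⟨he.1.ne hab, he.2.ne hab⟩

lemma IsFrame.sameShape {κ : Type*} {q' : Direction → ℤ × ℤ} {e e' : κ → ℤ × ℤ}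
    (h : IsFrame D q (range e)) (h' : IsFrame D q' (range e')) (he : SameShape e e') :
    SameShape (framePoints D q e) (framePoints D q' e') := by
  intro i j
  obtain rfl | hij := eq_or_ne i j
  · simp only [lt_irrefl, and_self]
  by_cases hleft : i.isLeft ∨ j.isLeft
  · obtain ⟨u, hu⟩ := exists_beyond_framePoints hij hleft
    exact (hu q e h).lt_iff_lt (hu q' e' h')
  · obtain s | a := i <;> obtain t | b := j <;> simp at hleft
    exact he a b

lemma IsFrame.of_sameShape {κ : Type*} {q' : Direction → ℤ × ℤ} {e e' : κ → ℤ × ℤ}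
    (h : IsFrame D q (range e))
    (hshape : SameShape (framePoints D q e) (framePoints D q' e')) :
    IsFrame D q' (range e') := by
  refine ⟨fun s hs t ht hts hrot ↦ ?_, ?_⟩
  · exact (hshape.beyond_iff (i := Sum.inl ⟨s, hs⟩) (j := Sum.inl ⟨t, ht⟩)).1
      (h.corner s hs t ht hts hrot)
  · rintro s hs _ ⟨i, rfl⟩
    exact (hshape.beyond_iff (i := Sum.inl ⟨s, hs⟩) (j := Sum.inr i)).1
      (h.core s hs _ (mem_range_self i))

lemma exists_surround (D : Finset Direction) (δ : PPerm) : ∃ σ : PPerm, σ.1 = δ.1 + D.card ∧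
    ∀ S : Set (ℤ × ℤ), IsPlot σ S ↔ ∃ q R, IsFrame D q R ∧ IsPlot δ R ∧ q '' D ∪ R = S := by
  obtain ⟨q, R, hframe, hR⟩ := exists_isFrame D δ
  obtain ⟨e, he, rfl⟩ := id hR
  have hpos := hframe.inGeneralPosition (he.inGeneralPosition (inGeneralPosition_graph δ))
  obtain ⟨σ, hσ⟩ := hpos.exists_isPlot
  refine ⟨σ, ?_, fun S ↦ (isPlot_iff_exists_sameShape hσ).trans ⟨?_, ?_⟩⟩
  · rw [hσ.length_eq_card fun i j h ↦ hpos.1 (congrArg Prod.fst h), Fintype.card_sum,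
      Fintype.card_coe, Fintype.card_fin, add_comm]
  · rintro ⟨p', hp', rfl⟩
    let q' : Direction → ℤ × ℤ := fun s ↦ if hs : s ∈ D then p' (Sum.inl ⟨s, hs⟩) else 0
    have hq' : framePoints D q' (p' ∘ Sum.inr) = p' := by
      funext i
      obtain ⟨s, hs⟩ | i := i
      · exact dif_pos hs
      · rfl
    refine ⟨q', _, hframe.of_sameShape (by rwa [hq']), ⟨_, he.trans (hp'.comp Sum.inr), rfl⟩, ?_⟩
    rw [← range_framePoints, hq']
  · rintro ⟨q', _, hframe', ⟨e', he', rfl⟩, rfl⟩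
    exact ⟨_, hframe.sameShape hframe' (he.symm.trans he'), range_framePoints _⟩

/-- The permutation obtained from `δ` by placing around its plot one new corner point for every
direction in `D`, in the pinwheel arrangement of `IsFrame`. -/
noncomputable def surround (D : Finset Direction) (δ : PPerm) : PPerm :=
  (exists_surround D δ).choose

/-- The permutation obtained from `δ` by adding a new point beyond it in direction `s`. In terms of
direct and skew sums, these are `1 ⊕ δ`, `δ ⊕ 1`, `1 ⊖ δ` and `δ ⊖ 1`. -/
noncomputable abbrev addCorner (s : Direction) (δ : PPerm) : PPerm := surround {s} δ

/-- The balloon of `δ`: the inflation of the centre of `25314` by `δ`. -/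
noncomputable abbrev balloon (δ : PPerm) : PPerm := surround Finset.univ δ

lemma length_surround (D : Finset Direction) (δ : PPerm) : (surround D δ).1 = δ.1 + D.card :=
  (exists_surround D δ).choose_spec.1

lemma isPlot_surround :
    IsPlot (surround D δ) S ↔ ∃ q R, IsFrame D q R ∧ IsPlot δ R ∧ q '' D ∪ R = S :=
  (exists_surround D δ).choose_spec.2 S

lemma IsFrame.isPlot_surround (h : IsFrame D q R) (hR : IsPlot δ R) :
    IsPlot (surround D δ) (q '' D ∪ R) :=
  PPerm.isPlot_surround.2 ⟨q, R, h, hR, rfl⟩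

lemma length_addCorner (s : Direction) (δ : PPerm) : (addCorner s δ).1 = δ.1 + 1 :=
  length_surround {s} δ

lemma length_balloon (δ : PPerm) : (balloon δ).1 = δ.1 + 4 :=
  length_surround Finset.univ δ

lemma isPlot_addCorner :
    IsPlot (addCorner s δ) S ↔ ∃ p R, (∀ r ∈ R, Beyond s p r) ∧ IsPlot δ R ∧ insert p R = S := by
  rw [isPlot_surround]
  constructor
  · rintro ⟨q, R, h, hR, rfl⟩
    exact ⟨q s, R, h.core s (Finset.mem_singleton_self s), hR, by
      rw [Finset.coe_singleton, image_singleton, singleton_union]⟩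
  · rintro ⟨p, R, h, hR, rfl⟩
    refine ⟨fun _ ↦ p, R, ⟨?_, ?_⟩, hR, ?_⟩
    · simp only [Finset.mem_singleton]
      rintro s rfl t rfl hts
      exact absurd rfl hts
    · simpa only [Finset.mem_singleton, forall_eq] using h
    · rw [Finset.coe_singleton, image_singleton, singleton_union]

lemma surround_empty (δ : PPerm) : surround ∅ δ = δ := by
  obtain ⟨q, R, h, hR⟩ := exists_isFrame ∅ δ
  have := h.isPlot_surround hR
  rw [Finset.coe_empty, image_empty, empty_union] at this
  exact this.unique hR

lemma le_surround_iff : Le lam (surround D δ) ↔ ∃ E ⊆ D, ∃ ε, Le ε δ ∧ lam = surround E ε := by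
  obtain ⟨q, R, h, hR⟩ := exists_isFrame D δ
  have hplot := h.isPlot_surround hR
  rw [le_iff_exists_subset hplot]
  constructor
  · rintro ⟨T, hT, hlam⟩
    obtain ⟨ε, hε, hεR⟩ := hR.exists_of_subset (T := R ∩ T) inter_subset_left
    refine ⟨{s ∈ D | q s ∈ T}, Finset.filter_subset _ _, ε, hε, hlam.unique ?_⟩
    convert (h.mono (Finset.filter_subset _ _) inter_subset_left).isPlot_surround hεR
    ext x
    constructor
    · intro hx
      obtain ⟨s, hs, rfl⟩ | hxR := hT hx
      · exact Or.inl ⟨s, Finset.mem_filter.2 ⟨hs, hx⟩, rfl⟩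
      · exact Or.inr ⟨hxR, hx⟩
    · rintro (⟨s, hs, rfl⟩ | hx)
      · exact (Finset.mem_filter.1 hs).2
      · exact hx.2
  · rintro ⟨E, hE, ε, hε, rfl⟩
    obtain ⟨R', hR', hεR⟩ := (le_iff_exists_subset hR).1 hε
    exact ⟨_, union_subset_union (image_mono hE) hR', (h.mono hE hR').isPlot_surround hεR⟩

lemma Le.surround (h : Le ε δ) (D : Finset Direction) : Le (surround D ε) (surround D δ) :=
  le_surround_iff.2 ⟨D, subset_rfl, ε, h, rfl⟩

lemma le_surround_self (D : Finset Direction) (δ : PPerm) : Le δ (surround D δ) :=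
  le_surround_iff.2 ⟨∅, D.empty_subset, δ, Le.refl δ, (surround_empty δ).symm⟩

lemma surround_le_surround_iff : Le (surround D ε) (surround D δ) ↔ Le ε δ := by
  refine ⟨fun hle ↦ ?_, fun h ↦ h.surround D⟩
  obtain ⟨q, R, h, hR⟩ := exists_isFrame D δ
  obtain ⟨_, hsub, hε⟩ := (le_iff_exists_subset (h.isPlot_surround hR)).1 hle
  obtain ⟨q', R', h', hR', rfl⟩ := isPlot_surround.1 hε
  refine hR'.le_of_subset hR fun r hr ↦ ?_
  obtain ⟨s, hs, rfl⟩ | hrR := hsub (Or.inr hr)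
  · exact absurd (h'.core s hs _ hr)
      (h.not_beyond hs (Or.inl rfl) (hsub (Or.inl (mem_image_of_mem q' hs))))
  · exact hrR

lemma surround_injective (D : Finset Direction) : Function.Injective (surround D) := fun _ _ h ↦
  (surround_le_surround_iff.1 (.of_eq h)).antisymm (surround_le_surround_iff.1 (.of_eq h.symm))

lemma surround_insert (hs : s ∉ E) (hrot : ∀ t ∈ E, rot t ≠ s) (δ : PPerm) :
    surround (insert s E) δ = addCorner s (surround E δ) := by
  obtain ⟨q, R, h, hR⟩ := exists_isFrame (insert s E) δ
  have hE := (h.mono (Finset.subset_insert s E) subset_rfl).isPlot_surround hR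
  refine (h.isPlot_surround hR).unique (isPlot_addCorner.2 ⟨q s, _, ?_, hE, ?_⟩)
  · rintro _ (⟨t, ht, rfl⟩ | hr)
    · exact h.corner s (Finset.mem_insert_self s E) t (Finset.mem_insert_of_mem ht)
        (fun hts ↦ hs (hts ▸ ht)) (hrot t ht)
    · exact h.core s (Finset.mem_insert_self s E) _ hr
  · rw [Finset.coe_insert, image_insert_eq, insert_union]

lemma addCorner_le_surround_iff (hs : s ∈ D) :
    Le (addCorner s ε) (surround D δ) ↔ Le ε (surround {t ∈ D | t ≠ s ∧ rot t ≠ s} δ) := by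
  constructor
  · intro hle
    obtain ⟨q, R, h, hR⟩ := exists_isFrame D δ
    obtain ⟨_, hsub, hε⟩ := (le_iff_exists_subset (h.isPlot_surround hR)).1 hle
    obtain ⟨p, R', hp, hR', rfl⟩ := isPlot_addCorner.1 hε
    have hpD := hsub (mem_insert p R')
    refine hR'.le_of_subset
      ((h.mono (Finset.filter_subset _ _) subset_rfl).isPlot_surround hR) fun r hr ↦ ?_
    obtain ⟨t, ht, rfl⟩ | hrR := hsub (mem_insert_of_mem p hr)
    · refine Or.inl ⟨t, Finset.mem_filter.2 ⟨ht, ?_, ?_⟩, rfl⟩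
      · rintro rfl
        exact h.not_beyond ht (Or.inl rfl) hpD (hp _ hr)
      · rintro rfl
        exact h.not_beyond ht (Or.inr rfl) hpD (hp _ hr)
    · exact Or.inr hrR
  · intro hle
    have hle' : Le (addCorner s ε) (addCorner s (surround {t ∈ D | t ≠ s ∧ rot t ≠ s} δ)) :=
      hle.surround {s}
    rw [← surround_insert (by simp) fun t ht ↦ (Finset.mem_filter.1 ht).2.2] at hle'
    exact hle'.trans (le_surround_iff.2
      ⟨_, Finset.insert_subset hs (Finset.filter_subset _ _), δ, Le.refl δ, rfl⟩)

lemma addCorner_addCorner (hst : t ≠ s) (hrot : rot t ≠ s) (δ : PPerm) :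
    addCorner s (addCorner t δ) = surround {s, t} δ :=
  (surround_insert (by simpa using hst.symm) (by simpa using hrot) δ).symm

lemma addCorner_neg_comm (s : Direction) (δ : PPerm) :
    addCorner (-s) (addCorner s δ) = addCorner s (addCorner (-s) δ) := by
  rw [addCorner_addCorner (neg_direction_ne s).symm (rot_ne_neg s),
    addCorner_addCorner (neg_direction_ne s) (rot_neg_ne s), Finset.pair_comm]

lemma addCorner_le_addCorner_iff : Le (addCorner s ε) (addCorner s δ) ↔ Le ε δ :=
  surround_le_surround_iff

lemma addCorner_le_balloon_iff :
    Le (addCorner s ε) (balloon δ) ↔ Le ε (addCorner (rot s) (addCorner (-s) δ)) := by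
  rw [addCorner_le_surround_iff (Finset.mem_univ s), filter_ne_and_rot_ne,
    addCorner_addCorner (rot_ne_neg s).symm (rot_neg_ne_rot s)]

lemma le_addCorner_iff :
    Le lam (addCorner s δ) ↔ Le lam δ ∨ ∃ ε, Le ε δ ∧ lam = addCorner s ε := by
  simp only [le_surround_iff, Finset.subset_singleton_iff, or_and_right, exists_or, exists_eq_left,
    surround_empty, exists_eq_right']

lemma le_balloon (h : Le lam (balloon δ)) : Le lam δ ∨ (∃ ε, Le ε δ ∧ lam = balloon ε) ∨
    ∃ s ε, lam = addCorner s ε := by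
  obtain ⟨E, -, ε, hε, rfl⟩ := le_surround_iff.1 h
  obtain rfl | rfl | ⟨s, hs, hrot⟩ := eq_empty_or_eq_univ_or_exists_forall_rot_ne E
  · exact Or.inl (by rwa [surround_empty])
  · exact Or.inr (Or.inl ⟨ε, hε, rfl⟩)
  · refine Or.inr (Or.inr ⟨s, surround (E.erase s) ε, ?_⟩)
    rw [← surround_insert (E.notMem_erase s) fun t ht ↦ hrot t (Finset.mem_of_mem_erase ht),
      Finset.insert_erase hs]

lemma balloon_ne_addCorner (s : Direction) (δ ε : PPerm) : balloon δ ≠ addCorner s ε := by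
  intro h
  have hle := (addCorner_le_balloon_iff.1 (.of_eq h.symm)).length_le
  have hlen := congrArg Sigma.fst h
  rw [length_addCorner, length_addCorner] at hle
  rw [length_balloon, length_addCorner] at hlen
  omega

lemma addCorner_eq_addCorner (hε : ε.1 ≠ 0) (h : addCorner s ε = addCorner t ε') :
    t = s ∨ t = -s ∧ ∃ τ, ε = addCorner (-s) τ ∧ ε' = addCorner s τ := by
  obtain ⟨S, hS⟩ := exists_isPlot (addCorner s ε)
  obtain ⟨p, R, hp, hR, rfl⟩ := isPlot_addCorner.1 hS
  obtain ⟨p', R', hp', hR', hRR'⟩ := isPlot_addCorner.1 (h ▸ hS)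
  have hpR : p ∉ R := fun hpR ↦ not_beyond_self _ _ (hp p hpR)
  have hp'R' : p' ∉ R' := fun hp'R' ↦ not_beyond_self _ _ (hp' p' hp'R')
  obtain rfl | hne := eq_or_ne p p'
  · left
    obtain rfl : R' = R := by
      rw [← insert_sdiff_self_of_notMem hpR, ← hRR', insert_sdiff_self_of_notMem hp'R']
    obtain ⟨e, -, rfl⟩ := hR
    have i : Fin ε.1 := ⟨0, Nat.pos_of_ne_zero hε⟩
    exact (hp' _ (mem_range_self i)).direction_unique (hp _ (mem_range_self i))
  · right
    have hp'R : p' ∈ R := (hRR'.subset (mem_insert p' R')).resolve_left hne.symm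
    have hpR' : p ∈ R' := (hRR'.superset (mem_insert p R)).resolve_left hne
    obtain rfl : t = -s := (hp' p hpR').eq_neg_of_swap (hp p' hp'R)
    refine ⟨rfl, ?_⟩
    obtain ⟨τ, -, hτ⟩ := hR.exists_of_subset (sdiff_subset (s := R) (t := {p'}))
    refine ⟨τ, hR.unique (isPlot_addCorner.2 ⟨p', R \ {p'}, ?_, hτ, ?_⟩),
      hR'.unique (isPlot_addCorner.2 ⟨p, R \ {p'}, fun r hr ↦ hp r hr.1, hτ, ?_⟩)⟩
    · rintro r ⟨hr, hrp'⟩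
      exact hp' r ((hRR'.superset (mem_insert_of_mem p hr)).resolve_left hrp')
    · rw [insert_sdiff_singleton, insert_eq_of_mem hp'R]
    · rw [insert_sdiff_singleton_comm hne, ← hRR', insert_sdiff_self_of_notMem hp'R']

/-! ### The Möbius function -/

lemma muAux_eq_muAux (σ : PPerm) : ∀ {n m : ℕ} {π : PPerm}, π.1 < n → π.1 < m →
    muAux n σ π = muAux m σ π
  | n + 1, m + 1, π, hn, hm => by
    rw [muAux, muAux]
    congr 3
    refine Finset.sum_congr rfl fun k hk ↦ Finset.sum_congr rfl fun p _ ↦ ?_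
    rw [Finset.mem_range] at hk
    exact muAux_eq_muAux σ (hk.trans_le (Nat.le_of_lt_succ hn))
      (hk.trans_le (Nat.le_of_lt_succ hm))

lemma mem_intervalCC : lam ∈ intervalCC σ π ↔ Le σ lam ∧ Le lam π := by
  simp only [intervalCC, Finset.mem_biUnion, Finset.mem_range, Finset.mem_image,
    Finset.mem_filter, Finset.mem_univ, true_and]
  constructor
  · rintro ⟨_, -, _, h, rfl⟩
    exact h
  · exact fun h ↦ ⟨_, Nat.lt_succ_of_le h.2.length_le, _, h, rfl⟩

lemma mem_intervalCO : lam ∈ intervalCO σ π ↔ Le σ lam ∧ Le lam π ∧ lam ≠ π := by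
  rw [intervalCO, Finset.mem_filter, mem_intervalCC, and_assoc]

lemma intervalCC_eq_insert_intervalCO (h : Le σ π) :
    intervalCC σ π = insert π (intervalCO σ π) := by
  rw [intervalCO, Finset.filter_ne', Finset.insert_erase (mem_intervalCC.2 ⟨h, Le.refl π⟩)]

lemma mu_self (σ : PPerm) : mu σ σ = 1 := by
  rw [mu, muAux, if_pos rfl]

lemma mu_eq_neg_sum_intervalCO (h : Le σ π) (hne : σ ≠ π) :
    mu σ π = -∑ lam ∈ intervalCO σ π, mu σ lam := by
  rw [mu, muAux, if_neg hne, if_pos h, Finset.sum_sigma']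
  congr 1
  refine Finset.sum_congr ?_ fun lam hlam ↦ ?_
  · ext ⟨m, p⟩
    simp only [Finset.mem_sigma, Finset.mem_range, Finset.mem_filter, Finset.mem_univ, true_and,
      mem_intervalCO]
    refine ⟨fun ⟨hm, hσ, hπ⟩ ↦ ⟨hσ, hπ, ?_⟩, fun ⟨hσ, hπ, hne⟩ ↦ ⟨?_, hσ, hπ⟩⟩
    · rintro rfl
      exact lt_irrefl _ hm
    · exact hπ.length_lt hne
  · obtain ⟨-, hle, hne⟩ := mem_intervalCO.1 hlam
    exact muAux_eq_muAux σ (hle.length_lt hne) (Nat.lt_succ_self _)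

lemma sum_mu_intervalCC (h : Le σ π) :
    ∑ lam ∈ intervalCC σ π, mu σ lam = if π = σ then 1 else 0 := by
  rw [intervalCC_eq_insert_intervalCO h, Finset.sum_insert (by simp [mem_intervalCO])]
  split_ifs with hπ
  · subst hπ
    rw [mu_self, add_eq_left, Finset.sum_eq_zero]
    rintro lam hlam
    obtain ⟨h₁, h₂, hne⟩ := mem_intervalCO.1 hlam
    exact absurd (h₂.antisymm h₁) hne
  · rw [mu_eq_neg_sum_intervalCO h (Ne.symm hπ), neg_add_cancel]

lemma eq_of_forall_sum_intervalCC_eq {G : Type*} [AddCommGroup G] {g g' : PPerm → G}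
    (h : ∀ π, Le σ π → ∑ lam ∈ intervalCC σ π, g lam = ∑ lam ∈ intervalCC σ π, g' lam)
    (hπ : Le σ π) : g π = g' π := by
  induction hn : π.1 using Nat.strong_induction_on generalizing π with
  | _ n ih =>
    have hsum := h π hπ
    rw [intervalCC_eq_insert_intervalCO hπ, Finset.sum_insert (by simp [mem_intervalCO]),
      Finset.sum_insert (by simp [mem_intervalCO])] at hsum
    have hlt : ∑ lam ∈ intervalCO σ π, g lam = ∑ lam ∈ intervalCO σ π, g' lam := by
      refine Finset.sum_congr rfl fun lam hlam ↦ ?_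
      obtain ⟨hσ, hle, hne⟩ := mem_intervalCO.1 hlam
      exact ih lam.1 (hn ▸ hle.length_lt hne) hσ rfl
    rwa [hlt, add_left_inj] at hsum

/-! ### Permutations with corners -/

/-- The permutation of length zero. It is not an element of the poset studied here, but
balloons and corners can be put around it. -/
def empty : PPerm := ⟨0, 1⟩

lemma eq_empty (h : δ.1 = 0) : δ = empty := by
  obtain ⟨n, p⟩ := δ
  obtain rfl : n = 0 := h
  exact congrArg (Sigma.mk 0) (Subsingleton.elim _ _)

lemma eq_one (h : δ.1 = 1) : δ = one := by
  obtain ⟨n, p⟩ := δ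
  obtain rfl : n = 1 := h
  exact congrArg (Sigma.mk 1) (Subsingleton.elim _ _)

lemma one_le_iff : Le one δ ↔ δ.1 ≠ 0 := by
  refine ⟨fun h ↦ Nat.one_le_iff_ne_zero.1 h.length_le, fun h ↦ ?_⟩
  have : Subsingleton (Fin one.1) := inferInstanceAs (Subsingleton (Fin 1))
  exact ⟨fun _ ↦ ⟨0, Nat.pos_of_ne_zero h⟩, Subsingleton.strictMono _, fun a b ↦ by
    rw [Subsingleton.elim a b]; simp only [lt_irrefl]⟩

lemma not_one_le_empty : ¬ Le one empty :=
  fun h ↦ one_le_iff.1 h rfl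

lemma empty_le (δ : PPerm) : Le empty δ :=
  ⟨Fin.elim0, fun a ↦ a.elim0, fun a ↦ a.elim0⟩

lemma addCorner_empty (s : Direction) : addCorner s empty = one :=
  eq_one (length_addCorner s empty)

lemma addCorner_ne_one (hδ : Le one δ) (s : Direction) : addCorner s δ ≠ one := fun h ↦
  one_le_iff.1 hδ (Nat.succ.inj ((length_addCorner s δ).symm.trans (congrArg Sigma.fst h)))

lemma addCorner_one (s : Direction) : addCorner s one = addCorner (-s) one := by
  conv_lhs => rw [← addCorner_empty (-s)]
  rw [← addCorner_neg_comm, addCorner_empty]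

lemma one_le_addCorner (s : Direction) (δ : PPerm) : Le one (addCorner s δ) :=
  one_le_iff.2 (by rw [length_addCorner]; exact Nat.succ_ne_zero _)

lemma one_le_balloon (δ : PPerm) : Le one (balloon δ) :=
  one_le_iff.2 (by rw [length_balloon]; exact Nat.succ_ne_zero _)

lemma balloon_ne_one (δ : PPerm) : balloon δ ≠ one := fun h ↦
  Nat.succ_ne_zero _ (Nat.succ.inj ((length_balloon δ).symm.trans (congrArg Sigma.fst h)))

/-- A permutation of length at least two whose plot has a point beyond all others in direction
`s`. -/
def HasCorner (s : Direction) (lam : PPerm) : Prop := ∃ ε, Le one ε ∧ lam = addCorner s ε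

lemma hasCorner_addCorner (hε : Le one ε) (s : Direction) : HasCorner s (addCorner s ε) :=
  ⟨ε, hε, rfl⟩

lemma not_hasCorner_one (s : Direction) : ¬ HasCorner s one :=
  fun ⟨_, hε, h⟩ ↦ addCorner_ne_one hε s h.symm

lemma not_hasCorner_balloon (s : Direction) (δ : PPerm) : ¬ HasCorner s (balloon δ) :=
  fun ⟨_, _, h⟩ ↦ balloon_ne_addCorner s _ _ h

lemma HasCorner.eq_or_eq_neg (hs : HasCorner s lam) (ht : HasCorner t lam) :
    t = s ∨ t = -s := by
  obtain ⟨ε, hε, rfl⟩ := hs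
  obtain ⟨ε', -, h⟩ := ht
  exact (addCorner_eq_addCorner (one_le_iff.1 hε) h).imp_right And.left

lemma hasCorner_addCorner_neg_iff (hε : Le one ε) :
    HasCorner s (addCorner (-s) ε) ↔ ε = one ∨ HasCorner s ε := by
  constructor
  · rintro ⟨ε', -, h⟩
    obtain hs | ⟨-, τ, hτ, -⟩ := addCorner_eq_addCorner (one_le_iff.1 hε) h
    · exact absurd hs.symm (neg_direction_ne s)
    rw [neg_neg] at hτ
    obtain hτ₀ | hτ₀ := eq_or_ne τ.1 0
    · exact Or.inl (by rw [hτ, eq_empty hτ₀, addCorner_empty])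
    · exact Or.inr ⟨τ, one_le_iff.2 hτ₀, hτ⟩
  · rintro (rfl | ⟨τ, -, rfl⟩)
    · exact addCorner_one s ▸ hasCorner_addCorner (Le.refl one) s
    · exact addCorner_neg_comm s τ ▸ hasCorner_addCorner (one_le_addCorner _ _) s

lemma sum_hasCorner {M : Type*} [AddCommMonoid M]
    (h : ∀ ε, Le one ε → (Le (addCorner s ε) π ↔ Le ε ρ)) (g : PPerm → M) :
    ∑ lam ∈ intervalCC one π with HasCorner s lam, g lam =
      ∑ ε ∈ intervalCC one ρ, g (addCorner s ε) := by
  rw [← Finset.sum_image (surround_injective {s}).injOn]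
  congr 1
  ext lam
  simp only [Finset.mem_filter, mem_intervalCC, Finset.mem_image]
  constructor
  · rintro ⟨⟨-, hle⟩, ε, hε, rfl⟩
    exact ⟨ε, ⟨hε, (h ε hε).1 hle⟩, rfl⟩
  · rintro ⟨ε, ⟨hε, hle⟩, rfl⟩
    exact ⟨⟨one_le_addCorner s ε, (h ε hε).2 hle⟩, ε, hε, rfl⟩

lemma sum_intervalCC_addCorner {M : Type*} [AddCommMonoid M] (hδ : Le one δ) (s : Direction)
    (g : PPerm → M) : ∑ lam ∈ intervalCC one (addCorner s δ), g lam =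
      (∑ ε ∈ intervalCC one δ, g (addCorner s ε)) +
        ∑ lam ∈ intervalCC one δ with ¬ HasCorner s lam, g lam := by
  rw [← Finset.sum_filter_add_sum_filter_not _ (HasCorner s),
    sum_hasCorner fun _ _ ↦ addCorner_le_addCorner_iff]
  congr 2
  ext lam
  simp only [Finset.mem_filter, mem_intervalCC, le_addCorner_iff]
  refine and_congr_left fun hcorner ↦ and_congr_right fun hlam ↦ or_iff_left_of_imp ?_
  rintro ⟨ε, -, rfl⟩
  obtain hε | hε := eq_or_ne ε.1 0
  · rwa [eq_empty hε, addCorner_empty]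
  · exact absurd (hasCorner_addCorner (one_le_iff.2 hε) s) hcorner

theorem mu_addCorner (hδ : Le one δ) (s : Direction) :
    mu one (addCorner s δ) = if HasCorner s δ then 0 else -mu one δ := by
  refine eq_of_forall_sum_intervalCC_eq (g := fun δ ↦ mu one (addCorner s δ))
    (g' := fun δ ↦ if HasCorner s δ then 0 else -mu one δ) (fun π hπ ↦ ?_) hδ
  have hsum := sum_mu_intervalCC (one_le_addCorner s π)
  rw [if_neg (addCorner_ne_one hπ s), sum_intervalCC_addCorner hπ, add_eq_zero_iff_eq_neg] at hsum
  rw [hsum, ← Finset.sum_neg_distrib, Finset.sum_filter]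
  exact Finset.sum_congr rfl fun lam _ ↦ ite_not _ _ _

/-- The part of the sum `∑ μ(1, λ)` over `λ ≤ π` in which `λ` has a corner in direction `s`. -/
noncomputable def cornerSum (s : Direction) (π : PPerm) : ℤ :=
  ∑ lam ∈ intervalCC one π with HasCorner s lam, mu one lam

lemma cornerSum_eq_cornerSum (hρ : Le one ρ) (hne : ρ ≠ one)
    (h : ∀ ε, Le one ε → (Le (addCorner s ε) π ↔ Le ε ρ)) : cornerSum s π = cornerSum s ρ := by
  have hsum := sum_mu_intervalCC hρ
  rw [if_neg hne, ← Finset.sum_filter_add_sum_filter_not _ (HasCorner s),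
    add_eq_zero_iff_eq_neg] at hsum
  rw [cornerSum, cornerSum, hsum, sum_hasCorner h, ← Finset.sum_neg_distrib, Finset.sum_filter]
  refine Finset.sum_congr rfl fun ε hε ↦ ?_
  rw [mu_addCorner (mem_intervalCC.1 hε).1, ite_not]

lemma intervalCC_one_one : intervalCC one one = {one} := by
  ext lam
  rw [mem_intervalCC, Finset.mem_singleton]
  exact ⟨fun h ↦ h.2.antisymm h.1, by rintro rfl; exact ⟨Le.refl _, Le.refl _⟩⟩

lemma cornerSum_one (s : Direction) : cornerSum s one = 0 := by
  rw [cornerSum, intervalCC_one_one, Finset.sum_filter, Finset.sum_singleton,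
    if_neg (not_hasCorner_one s)]

lemma cornerSum_addCorner_of_ne (hδ : Le one δ) (hts : t ≠ s) (htns : t ≠ -s) :
    cornerSum s (addCorner t δ) = cornerSum s δ := by
  have hexcl {lam : PPerm} (hs : HasCorner s lam) : ¬ HasCorner t lam := fun ht ↦
    (hs.eq_or_eq_neg ht).elim hts htns
  rw [cornerSum, cornerSum, Finset.sum_filter, sum_intervalCC_addCorner hδ, Finset.sum_eq_zero,
    zero_add, Finset.sum_filter, Finset.sum_filter]
  · refine Finset.sum_congr rfl fun lam _ ↦ ?_
    by_cases hs : HasCorner s lam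
    · rw [if_pos (hexcl hs)]
    · rw [if_neg hs, ite_self]
  · intro ε hε
    exact if_neg fun hs ↦ hexcl hs (hasCorner_addCorner (mem_intervalCC.1 hε).1 t)

lemma cornerSum_addCorner_neg (hδ : Le one δ) (s : Direction) :
    cornerSum s (addCorner (-s) δ) = -1 := by
  have hone : one ∈ intervalCC one δ := mem_intervalCC.2 ⟨Le.refl one, hδ⟩
  rw [cornerSum, Finset.sum_filter, sum_intervalCC_addCorner hδ, Finset.sum_filter,
    ← Finset.sum_add_distrib, ← Finset.sum_subset (Finset.singleton_subset_iff.2 hone),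
    Finset.sum_singleton, if_pos ((hasCorner_addCorner_neg_iff (Le.refl one)).2 (Or.inl rfl)),
    mu_addCorner (Le.refl one), if_neg (not_hasCorner_one _), if_pos (not_hasCorner_one _),
    if_neg (not_hasCorner_one _), mu_self, add_zero]
  intro ε hε hne
  have hε' := (mem_intervalCC.1 hε).1
  rw [Finset.mem_singleton] at hne
  rw [hasCorner_addCorner_neg_iff hε', mu_addCorner hε', or_iff_right hne]
  split_ifs <;> simp

lemma cornerSum_balloon (s : Direction) (δ : PPerm) :
    cornerSum s (balloon δ) = cornerSum s (addCorner (-s) δ) := by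
  have hρ := one_le_addCorner (-s) δ
  rw [cornerSum_eq_cornerSum (one_le_addCorner _ _) (addCorner_ne_one hρ (rot s))
      fun _ _ ↦ addCorner_le_balloon_iff,
    cornerSum_addCorner_of_ne hρ (rot_ne s) (rot_ne_neg s)]

lemma addCorner_addCorner_neg_le_balloon_iff {τ : PPerm} (hτ : Le one τ) :
    Le (addCorner s (addCorner (-s) τ)) (balloon δ) ↔ Le τ δ := by
  rw [addCorner_le_balloon_iff, le_addCorner_iff, addCorner_le_addCorner_iff, or_iff_left]
  rintro ⟨ε, -, h⟩
  obtain hs | ⟨hs, -⟩ := addCorner_eq_addCorner (one_le_iff.1 hτ) h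
  · exact rot_ne_neg s hs
  · rw [neg_neg] at hs
    exact rot_ne s hs

/-- A permutation is axial along `s` if it has a corner in one of the opposite directions `s` and
`-s`. -/
def IsAxial (s : Direction) (lam : PPerm) : Prop := HasCorner s lam ∨ HasCorner (-s) lam

lemma not_isAxial_one (s : Direction) : ¬ IsAxial s one :=
  not_or.2 ⟨not_hasCorner_one s, not_hasCorner_one (-s)⟩

/-- The part of the sum `∑ μ(1, λ)` over `λ ≤ π` in which `λ` is axial along `s`. -/
noncomputable def axisSum (s : Direction) (π : PPerm) : ℤ :=
  ∑ lam ∈ intervalCC one π with IsAxial s lam, mu one lam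

lemma axisSum_eq (s : Direction) (π : PPerm) :
    axisSum s π = cornerSum s π + cornerSum (-s) π -
      ∑ lam ∈ intervalCC one π with HasCorner s lam ∧ HasCorner (-s) lam, mu one lam := by
  rw [eq_sub_iff_add_eq, Finset.filter_and]
  have hunion : axisSum s π = ∑ lam ∈ {lam ∈ intervalCC one π | HasCorner s lam} ∪
      {lam ∈ intervalCC one π | HasCorner (-s) lam}, mu one lam := by
    refine Finset.sum_congr ?_ fun _ _ ↦ rfl
    ext lam
    rw [Finset.mem_union, Finset.mem_filter, Finset.mem_filter, Finset.mem_filter, ← and_or_left,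
      IsAxial]
  rw [hunion, cornerSum, cornerSum, Finset.sum_union_inter]

lemma hasCorner_and_hasCorner_neg_iff : HasCorner s lam ∧ HasCorner (-s) lam ↔
    lam = addCorner s one ∨ ∃ τ, Le one τ ∧ lam = addCorner s (addCorner (-s) τ) := by
  constructor
  · rintro ⟨⟨ε, hε, rfl⟩, hneg⟩
    have h := hasCorner_addCorner_neg_iff (s := -s) hε
    rw [neg_neg] at h
    obtain rfl | ⟨τ, hτ, rfl⟩ := h.1 hneg
    · exact Or.inl rfl
    · exact Or.inr ⟨τ, hτ, rfl⟩
  · rintro (rfl | ⟨τ, -, rfl⟩)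
    · exact ⟨hasCorner_addCorner (Le.refl one) s,
        addCorner_one s ▸ hasCorner_addCorner (Le.refl one) (-s)⟩
    · exact ⟨hasCorner_addCorner (one_le_addCorner _ _) s,
        addCorner_neg_comm s τ ▸ hasCorner_addCorner (one_le_addCorner _ _) (-s)⟩

lemma mu_addCorner_addCorner_neg {τ : PPerm} (hτ : Le one τ) (s : Direction) :
    mu one (addCorner s (addCorner (-s) τ)) =
      if τ ≠ one ∧ ¬ IsAxial s τ then mu one τ else 0 := by
  rw [mu_addCorner (one_le_addCorner _ _), mu_addCorner hτ, hasCorner_addCorner_neg_iff hτ, IsAxial]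
  grind

lemma sum_hasCorner_and_hasCorner_neg_balloon (s : Direction) (δ : PPerm) :
    ∑ lam ∈ intervalCC one (balloon δ) with HasCorner s lam ∧ HasCorner (-s) lam, mu one lam =
      -1 + ∑ τ ∈ intervalCC one δ with τ ≠ one ∧ ¬ IsAxial s τ, mu one τ := by
  let f (τ : PPerm) : PPerm := addCorner s (addCorner (-s) τ)
  have hf : Function.Injective f := (surround_injective _).comp (surround_injective _)
  have hcorners : {lam ∈ intervalCC one (balloon δ) | HasCorner s lam ∧ HasCorner (-s) lam} =
      insert (addCorner s one) ((intervalCC one δ).image f) := by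
    ext lam
    simp only [Finset.mem_filter, mem_intervalCC, hasCorner_and_hasCorner_neg_iff,
      Finset.mem_insert, Finset.mem_image]
    constructor
    · rintro ⟨⟨-, hle⟩, rfl | ⟨τ, hτ, rfl⟩⟩
      · exact Or.inl rfl
      · exact Or.inr ⟨τ, ⟨hτ, (addCorner_addCorner_neg_le_balloon_iff hτ).1 hle⟩, rfl⟩
    · rintro (rfl | ⟨τ, ⟨hτ, hle⟩, rfl⟩)
      · exact ⟨⟨one_le_addCorner _ _, addCorner_le_balloon_iff.2 (one_le_addCorner _ _)⟩,
          Or.inl rfl⟩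
      · exact ⟨⟨one_le_addCorner _ _, (addCorner_addCorner_neg_le_balloon_iff hτ).2 hle⟩,
          Or.inr ⟨τ, hτ, rfl⟩⟩
  have hnot_mem : addCorner s one ∉ (intervalCC one δ).image f := by
    simp only [Finset.mem_image, mem_intervalCC, not_exists, not_and]
    exact fun τ hτ h ↦ addCorner_ne_one hτ.1 (-s) (surround_injective _ h)
  rw [hcorners, Finset.sum_insert hnot_mem, Finset.sum_image hf.injOn, Finset.sum_filter,
    mu_addCorner (Le.refl one), if_neg (not_hasCorner_one s), mu_self]
  exact congrArg _ (Finset.sum_congr rfl fun τ hτ ↦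
    mu_addCorner_addCorner_neg (mem_intervalCC.1 hτ).1 s)

lemma sum_ne_one_and_not_isAxial (hδ : Le one δ) (s : Direction) :
    ∑ τ ∈ intervalCC one δ with τ ≠ one ∧ ¬ IsAxial s τ, mu one τ =
      (if δ = one then 1 else 0) - axisSum s δ - 1 := by
  have hone : one ∈ {τ ∈ intervalCC one δ | ¬ IsAxial s τ} :=
    Finset.mem_filter.2 ⟨mem_intervalCC.2 ⟨Le.refl one, hδ⟩, not_isAxial_one s⟩
  have hrest : ({τ ∈ intervalCC one δ | τ ≠ one ∧ ¬ IsAxial s τ} : Finset PPerm) =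
      {τ ∈ intervalCC one δ | ¬ IsAxial s τ}.erase one := by
    ext τ
    simp only [Finset.mem_filter, Finset.mem_erase]
    tauto
  rw [hrest, Finset.sum_erase_eq_sub hone, mu_self, ← sum_mu_intervalCC hδ,
    ← Finset.sum_filter_add_sum_filter_not (intervalCC one δ) (IsAxial s), axisSum,
    add_sub_cancel_left]

lemma axisSum_balloon (hδ : Le one δ) (s : Direction) :
    axisSum s (balloon δ) = axisSum s δ - if δ = one then 1 else 0 := by
  have hneg : cornerSum (-s) (balloon δ) = -1 := by
    rw [cornerSum_balloon, cornerSum_addCorner_neg hδ]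
  rw [axisSum_eq, hneg, cornerSum_balloon, cornerSum_addCorner_neg hδ,
    sum_hasCorner_and_hasCorner_neg_balloon, sum_ne_one_and_not_isAxial hδ]
  ring

lemma intervalCC_one_empty : intervalCC one empty = ∅ :=
  Finset.eq_empty_of_forall_notMem fun _ h ↦
    not_one_le_empty ((mem_intervalCC.1 h).1.trans (mem_intervalCC.1 h).2)

lemma axisSum_balloon_empty (s : Direction) : axisSum s (balloon empty) = 1 := by
  rw [axisSum_eq, cornerSum_balloon, cornerSum_balloon, addCorner_empty, addCorner_empty,
    cornerSum_one, cornerSum_one, sum_hasCorner_and_hasCorner_neg_balloon, intervalCC_one_empty,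
    Finset.filter_empty, Finset.sum_empty]
  rfl

/-! ### Balloons -/

/-- The part of the sum `∑ μ(1, λ)` over `λ ≤ π` in which `λ` has no corner. -/
noncomputable def cornerlessSum (π : PPerm) : ℤ :=
  ∑ lam ∈ intervalCC one π with ∀ s, ¬ HasCorner s lam, mu one lam

lemma not_isAxial_and_not_isAxial_rot_iff (s : Direction) :
    ¬ IsAxial s lam ∧ ¬ IsAxial (rot s) lam ↔ ∀ t, ¬ HasCorner t lam := by
  simp only [IsAxial, not_or]
  refine ⟨fun ⟨h₁, h₂⟩ t ↦ ?_, fun h ↦ ⟨⟨h _, h _⟩, h _, h _⟩⟩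
  obtain rfl | rfl | rfl | rfl := direction_cases s t
  exacts [h₁.1, h₁.2, h₂.1, h₂.2]

lemma IsAxial.not_isAxial_rot (h : IsAxial s lam) : ¬ IsAxial (rot s) lam := by
  have haxes : ∀ s t u : Direction, (t = s ∨ t = -s) → (u = rot s ∨ u = -rot s) →
      ¬ (u = t ∨ u = -t) := by decide
  rintro (h' | h') <;> obtain h | h := h
  · exact haxes s _ _ (Or.inl rfl) (Or.inl rfl) (h.eq_or_eq_neg h')
  · exact haxes s _ _ (Or.inr rfl) (Or.inl rfl) (h.eq_or_eq_neg h')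
  · exact haxes s _ _ (Or.inl rfl) (Or.inr rfl) (h.eq_or_eq_neg h')
  · exact haxes s _ _ (Or.inr rfl) (Or.inr rfl) (h.eq_or_eq_neg h')

lemma axisSum_add_axisSum_rot_add_cornerlessSum (hπ : Le one π) (s : Direction) :
    axisSum s π + axisSum (rot s) π + cornerlessSum π = if π = one then 1 else 0 := by
  have hrot : axisSum (rot s) π =
      ∑ lam ∈ intervalCC one π with ¬ IsAxial s lam ∧ IsAxial (rot s) lam, mu one lam := by
    refine Finset.sum_congr (Finset.filter_congr fun lam _ ↦ ?_) fun _ _ ↦ rfl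
    exact (and_iff_right_of_imp fun h hs ↦ hs.not_isAxial_rot h).symm
  simp only [cornerlessSum, ← not_isAxial_and_not_isAxial_rot_iff s]
  rw [← sum_mu_intervalCC hπ, hrot, axisSum, add_assoc, ← Finset.filter_filter,
    ← Finset.filter_filter, Finset.sum_filter_add_sum_filter_not,
    Finset.sum_filter_add_sum_filter_not]

lemma cornerlessSum_balloon (hδ : Le one δ) :
    cornerlessSum (balloon δ) = cornerlessSum δ + if δ = one then 1 else 0 := by
  have h := axisSum_add_axisSum_rot_add_cornerlessSum (one_le_balloon δ) 1
  have h' := axisSum_add_axisSum_rot_add_cornerlessSum hδ 1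
  rw [axisSum_balloon hδ, axisSum_balloon hδ, if_neg (balloon_ne_one δ)] at h
  linarith

lemma cornerlessSum_balloon_empty : cornerlessSum (balloon empty) = -2 := by
  have h := axisSum_add_axisSum_rot_add_cornerlessSum (one_le_balloon empty) 1
  rw [axisSum_balloon_empty, axisSum_balloon_empty, if_neg (balloon_ne_one empty)] at h
  linarith

/-- A permutation obtained by putting corners in all four directions around another one. -/
def IsBalloon (lam : PPerm) : Prop := ∃ ε, lam = balloon ε

/-- The part of the sum `∑ μ(1, λ)` over `λ ≤ π` in which `λ` is a balloon. -/
noncomputable def balloonSum (π : PPerm) : ℤ :=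
  ∑ lam ∈ intervalCC one π with IsBalloon lam, mu one lam

lemma IsBalloon.not_hasCorner (h : IsBalloon lam) (s : Direction) : ¬ HasCorner s lam := by
  obtain ⟨ε, rfl⟩ := h
  exact not_hasCorner_balloon s ε

lemma not_isBalloon_one : ¬ IsBalloon one :=
  fun ⟨ε, h⟩ ↦ balloon_ne_one ε h.symm

lemma cornerlessSum_eq (π : PPerm) : cornerlessSum π = balloonSum π +
    ∑ lam ∈ intervalCC one π with (∀ s, ¬ HasCorner s lam) ∧ ¬ IsBalloon lam, mu one lam := by
  rw [cornerlessSum, ← Finset.sum_filter_add_sum_filter_not _ IsBalloon, Finset.filter_filter,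
    Finset.filter_filter, balloonSum]
  congr 2
  exact Finset.filter_congr fun lam _ ↦ and_iff_right_of_imp IsBalloon.not_hasCorner

lemma eq_one_or_le_of_le_balloon (hle : Le lam (balloon δ)) (hcorner : ∀ s, ¬ HasCorner s lam)
    (hballoon : ¬ IsBalloon lam) : lam = one ∨ Le lam δ := by
  obtain h | ⟨ε, -, rfl⟩ | ⟨s, ε, rfl⟩ := le_balloon hle
  · exact Or.inr h
  · exact absurd ⟨ε, rfl⟩ hballoon
  · obtain hε | hε := eq_or_ne ε.1 0
    · exact Or.inl (by rw [eq_empty hε, addCorner_empty])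
    · exact absurd (hasCorner_addCorner (one_le_iff.2 hε) s) (hcorner s)

lemma balloonSum_balloon (hδ : Le one δ) :
    balloonSum (balloon δ) = balloonSum δ + if δ = one then 1 else 0 := by
  have hcornerless := cornerlessSum_balloon hδ
  rw [cornerlessSum_eq, cornerlessSum_eq δ, add_right_comm] at hcornerless
  refine (add_left_inj _).1 (hcornerless.trans (congrArg _ (Finset.sum_congr ?_ fun _ _ ↦ rfl)))
  ext lam
  rw [Finset.mem_filter, Finset.mem_filter, mem_intervalCC, mem_intervalCC]
  refine and_congr_left fun ⟨hcorner, hballoon⟩ ↦ and_congr_right fun _ ↦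
    ⟨fun hle ↦ hle.trans (le_surround_self _ δ), fun hle ↦ ?_⟩
  obtain rfl | hle' := eq_one_or_le_of_le_balloon hle hcorner hballoon
  exacts [hδ, hle']

lemma balloonSum_balloon_eq_sum (δ : PPerm) :
    balloonSum (balloon δ) =
      mu one (balloon empty) + ∑ ε ∈ intervalCC one δ, mu one (balloon ε) := by
  have hempty : balloon empty ∉ (intervalCC one δ).image balloon := by
    simp only [Finset.mem_image, mem_intervalCC, not_exists, not_and]
    exact fun ε hε h ↦ not_one_le_empty (surround_injective _ h ▸ hε.1)
  have hballoons : {lam ∈ intervalCC one (balloon δ) | IsBalloon lam} =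
      insert (balloon empty) ((intervalCC one δ).image balloon) := by
    ext lam
    simp only [Finset.mem_filter, mem_intervalCC, Finset.mem_insert, Finset.mem_image]
    constructor
    · rintro ⟨⟨-, hle⟩, ε, rfl⟩
      obtain hε | hε := eq_or_ne ε.1 0
      · exact Or.inl (by rw [eq_empty hε])
      · exact Or.inr ⟨ε, ⟨one_le_iff.2 hε, surround_le_surround_iff.1 hle⟩, rfl⟩
    · rintro (rfl | ⟨ε, ⟨-, hle⟩, rfl⟩)
      · exact ⟨⟨one_le_balloon _, surround_le_surround_iff.2 (empty_le δ)⟩, empty, rfl⟩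
      · exact ⟨⟨one_le_balloon _, surround_le_surround_iff.2 hle⟩, ε, rfl⟩
  rw [balloonSum, hballoons, Finset.sum_insert hempty,
    Finset.sum_image (surround_injective _).injOn]

theorem mu_balloon_empty : mu one (balloon empty) = -3 := by
  have hprimitive : {lam ∈ intervalCC one (balloon empty) |
      (∀ s, ¬ HasCorner s lam) ∧ ¬ IsBalloon lam} = ({one} : Finset PPerm) := by
    ext lam
    rw [Finset.mem_filter, mem_intervalCC, Finset.mem_singleton]
    constructor
    · rintro ⟨⟨hlam, hle⟩, hcorner, hballoon⟩
      exact (eq_one_or_le_of_le_balloon hle hcorner hballoon).resolve_right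
        fun h ↦ not_one_le_empty (hlam.trans h)
    · rintro rfl
      exact ⟨⟨Le.refl one, one_le_balloon empty⟩, not_hasCorner_one, not_isBalloon_one⟩
  have h := cornerlessSum_balloon_empty
  rw [cornerlessSum_eq, hprimitive, Finset.sum_singleton, mu_self, balloonSum_balloon_eq_sum,
    intervalCC_one_empty, Finset.sum_empty] at h
  linarith

theorem mu_balloon (hδ : Le one δ) : mu one (balloon δ) =
    mu one δ + (if IsBalloon δ then mu one δ else 0) + if δ = one then 3 else 0 := by
  refine eq_of_forall_sum_intervalCC_eq (g := fun δ ↦ mu one (balloon δ))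
    (g' := fun δ ↦ mu one δ + (if IsBalloon δ then mu one δ else 0) + if δ = one then 3 else 0)
    (fun π hπ ↦ ?_) hδ
  have hone : one ∈ intervalCC one π := mem_intervalCC.2 ⟨Le.refl one, hπ⟩
  have hsum := balloonSum_balloon_eq_sum π
  rw [balloonSum_balloon hπ, mu_balloon_empty, balloonSum, Finset.sum_filter] at hsum
  rw [Finset.sum_add_distrib, Finset.sum_add_distrib, sum_mu_intervalCC hπ, Finset.sum_ite_eq',
    if_pos hone]
  linarith

theorem mu_balloon_balloon (δ : PPerm) :
    mu one (balloon (balloon δ)) = 2 * mu one (balloon δ) := by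
  rw [mu_balloon (one_le_balloon δ), if_pos ⟨δ, rfl⟩, if_neg (balloon_ne_one δ)]
  ring

/-! ### Growth -/

lemma mu_iterate_balloon (k : ℕ) : mu one (balloon^[k + 1] empty) = -3 * 2 ^ k := by
  induction k with
  | zero => rw [Function.iterate_one, mu_balloon_empty]; rfl
  | succ k ih =>
    rw [Function.iterate_succ_apply'] at ih
    rw [Function.iterate_succ_apply', Function.iterate_succ_apply', mu_balloon_balloon, ih]
    ring

lemma length_iterate_balloon (k : ℕ) : (balloon^[k] empty).1 = 4 * k := by
  induction k with
  | zero => rfl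
  | succ k ih => rw [Function.iterate_succ_apply', length_balloon, ih, Nat.mul_succ]

lemma exists_abs_mu_eq_of_not_hasCorner (j : ℕ) (hπ : Le one π) (hs : ¬ HasCorner s π) :
    ∃ π' : PPerm, π'.1 = π.1 + j ∧ |mu one π'| = |mu one π| := by
  induction j generalizing π s with
  | zero => exact ⟨π, rfl, rfl⟩
  | succ j ih =>
    have hrot : ¬ HasCorner (rot s) (addCorner s π) := fun h ↦
      ((hasCorner_addCorner hπ s).eq_or_eq_neg h).elim (rot_ne s) (rot_ne_neg s)
    obtain ⟨π', hlen, hmu⟩ := ih (one_le_addCorner s π) hrot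
    refine ⟨π', by rw [hlen, length_addCorner, add_right_comm, add_assoc], ?_⟩
    rw [hmu, mu_addCorner hπ, if_neg hs, abs_neg]

lemma abs_mu_le_maxAbsMu (π : PPerm) : |mu one π| ≤ maxAbsMu π.1 := by
  rw [Int.abs_eq_natAbs, Int.ofNat_le]
  exact Finset.le_sup (f := fun p ↦ (mu one ⟨π.1, p⟩).natAbs) (Finset.mem_univ π.2)

theorem one_le_maxAbsMu {n : ℕ} (hn : 1 ≤ n) : 1 ≤ maxAbsMu n := by
  obtain ⟨π, hlen, hmu⟩ :=
    exists_abs_mu_eq_of_not_hasCorner (n - 1) (Le.refl one) (not_hasCorner_one 1)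
  obtain rfl : π.1 = n := hlen.trans (Nat.add_sub_cancel' hn)
  rw [mu_self, abs_one] at hmu
  exact_mod_cast hmu ▸ abs_mu_le_maxAbsMu π

theorem three_mul_two_pow_le_maxAbsMu {k n : ℕ} (hn : 4 * (k + 1) ≤ n) :
    3 * 2 ^ k ≤ maxAbsMu n := by
  have hcorner : ¬ HasCorner 1 (balloon^[k + 1] empty) := by
    rw [Function.iterate_succ_apply']
    exact not_hasCorner_balloon 1 _
  have hone : Le one (balloon^[k + 1] empty) := by
    rw [Function.iterate_succ_apply']
    exact one_le_balloon _
  obtain ⟨π, hlen, hmu⟩ :=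
    exists_abs_mu_eq_of_not_hasCorner (n - 4 * (k + 1)) hone hcorner
  rw [length_iterate_balloon, Nat.add_sub_cancel' hn] at hlen
  have hmax := hlen ▸ abs_mu_le_maxAbsMu π
  rw [hmu, mu_iterate_balloon, neg_mul, abs_neg, abs_of_nonneg (by positivity)] at hmax
  exact_mod_cast hmax

end PPerm

/-- **(Theorem `theorem-growth-of-mobius-function`.)**  For all `n ≥ 1`,
`M(n) ≥ 2^{⌊n/4⌋ − 1}` (where `2^{−1} = 1/2` for `n < 4`); in particular the
principal Möbius function grows at least exponentially. -/
theorem growth_of_mobius_function :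
    ∀ n : ℕ, 1 ≤ n → (2 : ℝ) ^ (((n / 4 : ℕ) : ℤ) - 1) ≤ (maxAbsMu n : ℝ) := by
  intro n hn
  cases hk : n / 4 with
  | zero =>
    calc (2 : ℝ) ^ (((0 : ℕ) : ℤ) - 1) ≤ 1 := by norm_num
      _ ≤ maxAbsMu n := Nat.one_le_cast.2 (PPerm.one_le_maxAbsMu hn)
  | succ k =>
    calc (2 : ℝ) ^ (((k + 1 : ℕ) : ℤ) - 1) = 2 ^ k := by
          rw [Nat.cast_succ, add_sub_cancel_right, zpow_natCast]
      _ ≤ 3 * 2 ^ k := le_mul_of_one_le_left (by positivity) (by norm_num)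
      _ ≤ maxAbsMu n := mod_cast PPerm.three_mul_two_pow_le_maxAbsMu (by lia : 4 * (k + 1) ≤ n)
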